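/- Lower bound in Stein's lemma: let ℙ ≪ ℚ be probability measures on X with H(ℙ;ℚ) = ∫ ln(dℙ/dℚ) dℙ finite. For every sequence of measurable sets Aₙ ⊆ Xⁿ with ℙ^{⊗n}(Aₙ) → 1, one has liminf_{n→∞} (1/n) ln ℚ^{⊗n}(Aₙ) ≥ −H(ℙ;ℚ) − δ for all δ > 0. -/

import Mathlib

/-!
Write `L = ln(dP/dQ)` and `H = ∫ L dP`. On product spaces, `P^{⊗n}` has density
`∏ᵢ dP/dQ(xᵢ) ≤ exp (∑ᵢ L(xᵢ))` with respect to `Q^{⊗n}`, so every measurable set on which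
`∑ᵢ L(xᵢ) ≤ c` satisfies `P^{⊗n}(B) ≤ exp(c) Q^{⊗n}(B)` (`pi_le_exp_mul_pi`).
By the strong law of large numbers, the set `T` where `(1/n) ∑ᵢ L(xᵢ)` is within `δ/2` of `H`
has `P^{⊗n}`-probability tending to `1` (`tendsto_pi_atypical`). Hence `P^{⊗n}(Aₙ ∩ T) ≥ 1/4`
eventually, and `Q^{⊗n}(Aₙ) ≥ exp(-n(H + δ/2)) / 4`. After taking logarithms and dividing by `n`,
the constant `ln(1/4)/n` is absorbed in the remaining `δ/2`.
-/

open MeasureTheory Filter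

/-- The product of measures `Q` with density `f` has the tensor power of `f` as density. -/
lemma pi_withDensity_prod {X : Type*} [MeasurableSpace X] (Q : Measure X)
    [IsProbabilityMeasure Q] {f : X → ENNReal} (hf : Measurable f)
    [SigmaFinite (Q.withDensity f)] (n : ℕ) :
    (Measure.pi fun _ : Fin n => Q.withDensity f) =
      (Measure.pi fun _ : Fin n => Q).withDensity fun x => ∏ i, f (x i) := by
  refine Measure.pi_eq fun s hs => ?_
  rw [withDensity_apply _ (MeasurableSet.univ_pi hs),
    ← lintegral_indicator (MeasurableSet.univ_pi hs)]
  have hind : (Set.univ.pi s).indicator (fun x : Fin n → X => ∏ i, f (x i)) =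
      fun x => ∏ i, (s i).indicator f (x i) := by
    ext x
    by_cases hx : x ∈ Set.univ.pi s
    · rw [Set.indicator_of_mem hx]
      exact Finset.prod_congr rfl fun i _ =>
        (Set.indicator_of_mem (hx i (Set.mem_univ i)) f).symm
    · rw [Set.indicator_of_notMem hx]
      obtain ⟨i, hi⟩ : ∃ i, x i ∉ s i := by simpa [Set.mem_pi] using hx
      exact (Finset.prod_eq_zero (Finset.mem_univ i) (Set.indicator_of_notMem hi f)).symm
  have hm : ∀ i, Measurable ((s i).indicator f) := fun i => hf.indicator (hs i)
  rw [hind, ProbabilityTheory.lintegral_prod_eq_prod_lintegral_of_indepFun Finset.univ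
    (fun (i : Fin n) (x : Fin n → X) => (s i).indicator f (x i))
    (ProbabilityTheory.iIndepFun_pi fun i => (hm i).aemeasurable)
    (fun i => (hm i).comp (measurable_pi_apply i))]
  refine Finset.prod_congr rfl fun i _ => ?_
  rw [withDensity_apply _ (hs i), ← lintegral_indicator (hs i)]
  exact (measurePreserving_eval (fun _ : Fin n => Q) i).lintegral_comp (hm i)

/-- Change of measure on a set where the log-likelihood ratio is bounded above. -/
lemma pi_le_exp_mul_pi {X : Type*} [MeasurableSpace X] (P Q : Measure X)
    [IsProbabilityMeasure P] [IsProbabilityMeasure Q] (hac : P ≪ Q) {n : ℕ}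
    {B : Set (Fin n → X)} (hB : MeasurableSet B) (c : ℝ)
    (hc : ∀ x ∈ B, ∑ i, Real.log ((P.rnDeriv Q (x i)).toReal) ≤ c) :
    (Measure.pi fun _ : Fin n => P) B ≤
      ENNReal.ofReal (Real.exp c) * (Measure.pi fun _ : Fin n => Q) B := by
  -- The real-valued version of the density is finite everywhere, not just almost everywhere.
  set f : X → ENNReal := fun x => ENNReal.ofReal (P.rnDeriv Q x).toReal with hf
  have hfm : Measurable f := (Measure.measurable_rnDeriv P Q).ennreal_toReal.ennreal_ofReal
  have hP : Q.withDensity f = P := by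
    rw [← Measure.withDensity_rnDeriv_eq P Q hac]
    refine withDensity_congr_ae ?_
    filter_upwards [Measure.rnDeriv_lt_top P Q] with x hx
    exact ENNReal.ofReal_toReal hx.ne
  have : SigmaFinite (Q.withDensity f) := by rw [hP]; infer_instance
  have key := pi_withDensity_prod Q hfm n
  rw [hP] at key
  rw [key, withDensity_apply _ hB, ← setLIntegral_const]
  refine setLIntegral_mono measurable_const fun x hx => ?_
  -- `Real.log 0 = 0`, so where the density vanishes the bound below reads `0 ≤ 1`.
  have hle : ∀ r : ℝ, r ≤ Real.exp (Real.log r) := fun r => Real.le_exp_log r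
  calc ∏ i, f (x i)
      ≤ ∏ i, ENNReal.ofReal (Real.exp (Real.log ((P.rnDeriv Q (x i)).toReal))) :=
        Finset.prod_le_prod' fun i _ => ENNReal.ofReal_le_ofReal (hle _)
    _ = ENNReal.ofReal (Real.exp (∑ i, Real.log ((P.rnDeriv Q (x i)).toReal))) := by
        rw [Real.exp_sum, ENNReal.ofReal_prod_of_nonneg fun i _ => (Real.exp_pos _).le]
    _ ≤ ENNReal.ofReal (Real.exp c) :=
        ENNReal.ofReal_le_ofReal (Real.exp_le_exp.2 (hc x hx))

/-- Weak law of large numbers on the finite powers `Xⁿ`, deduced from the strong law for the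
coordinates of the infinite product `X^ℕ`. -/
lemma tendsto_pi_atypical {X : Type*} [MeasurableSpace X] (P : Measure X)
    [IsProbabilityMeasure P] {L : X → ℝ} (hL : Measurable L) (hint : Integrable L P)
    {ε : ℝ} (hε : 0 < ε) :
    Tendsto (fun n : ℕ => (Measure.pi fun _ : Fin n => P)
      {x | ε ≤ |(∑ i, L (x i)) / n - ∫ y, L y ∂P|}) atTop (nhds 0) := by
  set μ := Measure.infinitePi fun _ : ℕ => P with hμ
  have hmp : ∀ i, MeasurePreserving (fun ω : ℕ → X => ω i) μ P := fun i =>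
    measurePreserving_eval_infinitePi (fun _ : ℕ => P) i
  have hind : ProbabilityTheory.iIndepFun (fun (i : ℕ) (ω : ℕ → X) => L (ω i)) μ :=
    ProbabilityTheory.iIndepFun_infinitePi (X := fun _ : ℕ => L) fun _ => hL
  have slln := ProbabilityTheory.strong_law_ae_real (μ := μ) (fun i ω => L (ω i))
    ((hmp 0).integrable_comp_of_integrable hint) (fun i j hij => hind.indepFun hij)
    (fun i => ⟨(hL.comp (hmp i).measurable).aemeasurable,
      (hL.comp (hmp 0).measurable).aemeasurable, by
        change Measure.map (L ∘ fun ω : ℕ → X => ω i) μ =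
          Measure.map (L ∘ fun ω : ℕ → X => ω 0) μ
        rw [← Measure.map_map hL (hmp i).measurable, ← Measure.map_map hL (hmp 0).measurable,
          (hmp i).map_eq, (hmp 0).map_eq]⟩)
  have hH : ∫ ω, L (ω 0) ∂μ = ∫ y, L y ∂P := by
    rw [← (hmp 0).map_eq, integral_map (hmp 0).measurable.aemeasurable
      hL.aestronglyMeasurable]
  rw [hH] at slln
  have him := tendstoInMeasure_of_tendsto_ae (fun n => by
    apply Measurable.aestronglyMeasurable
    exact (Finset.measurable_sum _ fun i _ =>
      hL.comp (measurable_pi_apply i)).div_const _) slln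
  rw [tendstoInMeasure_iff_norm] at him
  refine (him ε hε).congr fun n => ?_
  have hmap : μ.map (fun ω (i : Fin n) => ω i) = Measure.pi fun _ : Fin n => P := by
    rw [hμ, Measure.map_infinitePi_infinitePi_of_inj Fin.val_injective,
      Measure.infinitePi_eq_pi]
  rw [← hmap, Measure.map_apply (by fun_prop)]
  · congr 1
    ext ω
    simp [Finset.sum_range, Real.norm_eq_abs]
  · exact measurableSet_le measurable_const (by fun_prop)

/-- Lower bound in Stein's lemma: if `ℙ ≪ ℚ`, `L = ln(dℙ/dℚ)` is `ℙ`-integrable with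
`H = ∫ L dℙ`, and `Aₙ ⊆ Xⁿ` are measurable sets with `ℙ^{⊗n}(Aₙ) → 1`, then for every
`δ > 0`, `liminf (1/n) ln ℚ^{⊗n}(Aₙ) ≥ −H − δ`. -/
theorem stein_lower_bound {X : Type*} [MeasurableSpace X]
    (P Q : Measure X) [IsProbabilityMeasure P] [IsProbabilityMeasure Q]
    (hac : P ≪ Q)
    (hint : Integrable (fun x => Real.log ((P.rnDeriv Q x).toReal)) P)
    (A : (n : ℕ) → Set (Fin n → X))
    (hmeas : ∀ n, MeasurableSet (A n))
    (hP1 : Tendsto (fun n => ((Measure.pi fun _ : Fin n => P) (A n)).toReal)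
      atTop (nhds 1)) :
    ∀ δ > (0:ℝ),
      -(∫ x, Real.log ((P.rnDeriv Q x).toReal) ∂P) - δ ≤
        liminf (fun n =>
          Real.log (((Measure.pi fun _ : Fin n => Q) (A n)).toReal) / (n : ℝ)) atTop := by
  intro δ hδ
  set H := ∫ x, Real.log ((P.rnDeriv Q x).toReal) ∂P with hH
  have hLm : Measurable fun x => Real.log ((P.rnDeriv Q x).toReal) :=
    Real.measurable_log.comp (Measure.measurable_rnDeriv P Q).ennreal_toReal
  -- A real `liminf` is meaningful only if the sequence is not tending to `+∞`; here it is `≤ 0`.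
  have hcob : IsCoboundedUnder (· ≥ ·) atTop (fun n : ℕ =>
      Real.log (((Measure.pi fun _ : Fin n => Q) (A n)).toReal) / (n : ℝ)) := by
    refine IsBoundedUnder.isCoboundedUnder_ge (isBoundedUnder_of ⟨0, fun n => ?_⟩)
    refine div_nonpos_of_nonpos_of_nonneg (Real.log_nonpos ENNReal.toReal_nonneg ?_)
      n.cast_nonneg
    exact measureReal_le_one
  refine le_liminf_of_le hcob ?_
  have hT := (ENNReal.tendsto_toReal ENNReal.zero_ne_top).comp
    (tendsto_pi_atypical P hLm hint (half_pos hδ))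
  have hlog : Tendsto (fun n : ℕ => Real.log (1 / 4) / (n : ℝ)) atTop (nhds 0) :=
    tendsto_const_div_atTop_nhds_zero_nat _
  filter_upwards [hP1.eventually (lt_mem_nhds (show (1 / 2 : ℝ) < 1 by norm_num)),
    hT.eventually (gt_mem_nhds (show (ENNReal.toReal 0) < 1 / 4 by norm_num)),
    hlog.eventually (lt_mem_nhds (show -(δ / 2) < 0 by linarith)),
    eventually_gt_atTop 0] with n hA hTn hln hn
  have hn' : (0 : ℝ) < n := Nat.cast_pos.2 hn
  set T : Set (Fin n → X) :=
    {x | δ / 2 ≤ |(∑ i, Real.log ((P.rnDeriv Q (x i)).toReal)) / n - H|} with hTdef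
  have hTm : MeasurableSet T := measurableSet_le measurable_const
    (((Finset.measurable_sum _ fun i _ =>
      hLm.comp (measurable_pi_apply i)).div_const _).sub_const _).norm
  have hchange := pi_le_exp_mul_pi P Q hac ((hmeas n).diff hTm) (n * (H + δ / 2)) (by
    intro x hx
    have h1 : |(∑ i, Real.log ((P.rnDeriv Q (x i)).toReal)) / n - H| < δ / 2 := not_le.1 hx.2
    have h2 := (abs_lt.1 h1).2
    have h3 : (∑ i, Real.log ((P.rnDeriv Q (x i)).toReal)) / n < H + δ / 2 := by linarith
    rw [div_lt_iff₀ hn'] at h3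
    linarith)
  have hreal : (Measure.pi fun _ : Fin n => P).real (A n \ T) ≤
      Real.exp (n * (H + δ / 2)) * (Measure.pi fun _ : Fin n => Q).real (A n \ T) := by
    have := ENNReal.toReal_mono
      (ENNReal.mul_ne_top ENNReal.ofReal_ne_top (measure_ne_top _ _)) hchange
    rwa [ENNReal.toReal_mul, ENNReal.toReal_ofReal (Real.exp_pos _).le] at this
  have hdiff : (1 / 4 : ℝ) ≤ (Measure.pi fun _ : Fin n => P).real (A n \ T) := by
    have h1 : (Measure.pi fun _ : Fin n => P).real (A n) -
      (Measure.pi fun _ : Fin n => P).real T ≤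
        (Measure.pi fun _ : Fin n => P).real (A n \ T) := le_measureReal_sdiff
    have h2 : 1 / 2 < (Measure.pi fun _ : Fin n => P).real (A n) := hA
    have h3 : (Measure.pi fun _ : Fin n => P).real T < 1 / 4 := hTn
    linarith
  have hsub : (Measure.pi fun _ : Fin n => Q).real (A n \ T) ≤
      (Measure.pi fun _ : Fin n => Q).real (A n) := measureReal_mono Set.sdiff_subset
  have hfin : (1 / 4 : ℝ) ≤
      Real.exp (n * (H + δ / 2)) * (Measure.pi fun _ : Fin n => Q).real (A n) :=
    hdiff.trans (hreal.trans (mul_le_mul_of_nonneg_left hsub (Real.exp_pos _).le))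
  have hpos : 0 < (Measure.pi fun _ : Fin n => Q).real (A n) :=
    pos_of_mul_pos_right (lt_of_lt_of_le (by norm_num) hfin) (Real.exp_pos _).le
  have hl := Real.log_le_log (by norm_num) hfin
  rw [Real.log_mul (Real.exp_pos _).ne' hpos.ne', Real.log_exp] at hl
  change -H - δ ≤ Real.log ((Measure.pi fun _ : Fin n => Q).real (A n)) / n
  rw [lt_div_iff₀ hn'] at hln
  rw [le_div_iff₀ hn']
  nlinarith
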